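/- Let d ≥ 2, p ≥ 1 and q > p. Let (u_i) be a sequence of Schwarz symmetric functions on ℤ^d with ‖u_i‖_p ≤ 1 for all i. Then there is a subsequence of (u_i) that converges in the ℓ^q(ℤ^d) norm. -/

import Mathlib

open Filter Topology

noncomputable section

abbrev ZLat (d : ℕ) := Fin d → ℤ

def stdVec (d : ℕ) (i : Fin d) : Fin d → ℝ := fun j => if j = i then 1 else 0

/-- The set of directions E⃗ ⊆ ℝ^d. -/
def Evec (d : ℕ) : Set (Fin d → ℝ) :=
  {e | (∃ i, e = stdVec d i) ∨
    (∃ i j : Fin d, i < j ∧ e = fun k => (stdVec d i k + stdVec d j k) / 2) ∨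
    (∃ i j : Fin d, i < j ∧ e = fun k => (stdVec d i k - stdVec d j k) / 2)}

/-- A fixed enumeration of E⃗ (for d = 2 it is e₁, e₂, (e₁+e₂)/2, (e₁-e₂)/2). -/
def EvecList (d : ℕ) : List (Fin d → ℝ) :=
  ((List.finRange d).map (stdVec d)) ++
  ((List.finRange d).flatMap fun i => (List.finRange d).filterMap fun j =>
    if i < j then some (fun k => (stdVec d i k + stdVec d j k) / 2) else none) ++
  ((List.finRange d).flatMap fun i => (List.finRange d).filterMap fun j =>
    if i < j then some (fun k => (stdVec d i k - stdVec d j k) / 2) else none)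

/-- The n-th largest value of `u`, counted with multiplicity (1-indexed). -/
def nthLargest {α : Type*} (u : α → NNReal) (n : ℕ) : NNReal :=
  sSup {t | ∃ Ω : Finset α, Ω.card = n ∧ ∀ x ∈ Ω, t ≤ u x}

/-- The 1-indexed position of the point with doubled coordinate `m` in the
spiral order 0, 1, −1, 2, −2, … (for even m) resp. 1/2, −1/2, 3/2, −3/2, … (for odd m). -/
def posIdx (m : ℤ) : ℕ := (if 0 < m then m else 1 - m).toNat

/-- `x` and `y` lie on a common line with direction `e`. -/
def sameLine {d : ℕ} (e : Fin d → ℝ) (x y : ZLat d) : Prop :=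
  ∃ c : ℝ, (fun i => (x i : ℝ) - (y i : ℝ)) = c • e

/-- Twice the inner product ⟨e, x⟩, as an integer. -/
def pairing {d : ℕ} (e : Fin d → ℝ) (x : ZLat d) : ℤ :=
  ⌊2 * ∑ i, e i * (x i : ℝ)⌋

/-- One-step rearrangement `R_e`. -/
def stepR {d : ℕ} (e : Fin d → ℝ) (u : ZLat d → NNReal) : ZLat d → NNReal :=
  fun x => nthLargest (fun y : {y : ZLat d // sameLine e x y} => u y.1) (posIdx (pairing e x))

/-- `R^k u` : k successive one-step rearrangements cycling through the fixed enumeration. -/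
def iterR (d : ℕ) (u : ZLat d → NNReal) : ℕ → ZLat d → NNReal
  | 0 => u
  | k + 1 => stepR ((EvecList d).getD (k % (EvecList d).length) 0) (iterR d u k)

/-- The Schwarz rearrangement on ℤ^d : pointwise limit of `R^k u`. -/
def RZd (d : ℕ) (u : ZLat d → NNReal) : ZLat d → NNReal :=
  fun x => limUnder atTop fun k => iterR d u k x

def Admissible {α : Type*} (u : α → NNReal) : Prop :=
  ∀ t : NNReal, 0 < t → {x | t < u x}.Finite

def Equimeasurable {α : Type*} (u v : α → NNReal) : Prop :=
  ∀ t : NNReal, 0 < t → Nonempty ({x | t < u x} ≃ {x | t < v x})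

/-- Graph distance (ℓ¹ distance) on the lattice ℤ^d. -/
def latDist {d : ℕ} (x y : ZLat d) : ℕ := ∑ i, (x i - y i).natAbs

/-- The i-th standard basis vector of ℤ^d. -/
def latE {d : ℕ} (i : Fin d) : ZLat d := fun j => if j = i then 1 else 0

/-- ‖∇u‖_p^p : the p-Sobolev energy, summing over each edge {x, x+e_i} once. -/
def gradEnergy (d : ℕ) (p : ℝ) (u : ZLat d → NNReal) : ENNReal :=
  ∑' (x : ZLat d) (i : Fin d), ENNReal.ofReal (|(u (x + latE i) : ℝ) - (u x : ℝ)| ^ p)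

/-- ‖∇u‖_p. -/
def gradNorm (d : ℕ) (p : ℝ) (u : ZLat d → NNReal) : ENNReal :=
  gradEnergy d p u ^ (1 / p)

/-- Graph automorphism of the lattice graph ℤ^d. -/
def IsLatAuto {d : ℕ} (σ : ZLat d ≃ ZLat d) : Prop :=
  ∀ x y : ZLat d, latDist (σ x) (σ y) = 1 ↔ latDist x y = 1

def Supermodular (G : NNReal → NNReal → NNReal) : Prop :=
  ∀ s t s₀ t₀ : NNReal, G (s + s₀) t + G s (t + t₀) ≤ G (s + s₀) (t + t₀) + G s t

def StrictlySupermodular (G : NNReal → NNReal → NNReal) : Prop :=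
  ∀ s t s₀ t₀ : NNReal, 0 < s₀ → 0 < t₀ →
    G (s + s₀) t + G s (t + t₀) < G (s + s₀) (t + t₀) + G s t

/-- The values of `u` are strictly decreasing: a₁ > a₂ > a₃ > ⋯ . -/
def StrictRan {α : Type*} (u : α → NNReal) : Prop :=
  ∀ n : ℕ, 0 < n → nthLargest u (n + 1) < nthLargest u n


theorem nthLargest_le' {α : Type*} {u : α → NNReal} {M : NNReal} (hM : ∀ x, u x ≤ M)
    {n : ℕ} (hn : 1 ≤ n) : nthLargest u n ≤ M := by
  unfold nthLargest
  apply csSup_le'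
  rintro t ⟨Ω, hc, h⟩
  obtain ⟨x, hx⟩ := Finset.card_pos.mp (by omega : 0 < Ω.card)
  exact (h x hx).trans (hM x)

theorem le_nthLargest' {α : Type*} {u : α → NNReal} {M : NNReal} (hM : ∀ x, u x ≤ M)
    {n : ℕ} (hn : 1 ≤ n) {t : NNReal} (Ω : Finset α) (hc : Ω.card = n)
    (h : ∀ x ∈ Ω, t ≤ u x) : t ≤ nthLargest u n := by
  unfold nthLargest
  refine le_csSup ⟨M, ?_⟩ ⟨Ω, hc, h⟩
  rintro t ⟨Ω, hc, h⟩
  obtain ⟨x, hx⟩ := Finset.card_pos.mp (by omega : 0 < Ω.card)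
  exact (h x hx).trans (hM x)

theorem nthLargest_anti' {α : Type*} {u : α → NNReal} {M : NNReal} (hM : ∀ x, u x ≤ M)
    {m n : ℕ} (hm : 1 ≤ m) (hn : m ≤ n) : nthLargest u n ≤ nthLargest u m := by
  conv_lhs => unfold nthLargest
  apply csSup_le'
  rintro t ⟨Ω, hc, h⟩
  obtain ⟨Ω', hs, hc'⟩ := Finset.exists_subset_card_eq (by omega : m ≤ Ω.card)
  exact le_nthLargest' hM hm Ω' hc' fun x hx => h x (hs hx)

theorem sum_le_nth {α : Type*} [DecidableEq α] {u : α → NNReal} {M : NNReal} (hM : ∀ x, u x ≤ M) (n : ℕ) :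
    ∀ S : Finset α, S.card = n → ∑ x ∈ S, u x ≤ ∑ j ∈ Finset.range n, nthLargest u (j+1) := by
  induction n with
  | zero => intro S hS; simp [Finset.card_eq_zero.mp hS]
  | succ n ih =>
    intro S hS
    obtain ⟨x, hx, hmin⟩ := S.exists_min_image u (Finset.card_pos.mp (by omega))
    rw [Finset.sum_range_succ, ← Finset.sum_erase_add S u hx]
    refine add_le_add (ih _ (by rw [Finset.card_erase_of_mem hx]; omega)) ?_
    exact le_nthLargest' hM (by omega) S hS hmin

theorem posIdx_pos (m : ℤ) : 1 ≤ posIdx m := by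
  unfold posIdx; split_ifs <;> omega

theorem sameLine_refl {d : ℕ} (e : Fin d → ℝ) (x : ZLat d) : sameLine e x x :=
  ⟨0, by ext; simp⟩

theorem sameLine_symm {d : ℕ} {e : Fin d → ℝ} {x y : ZLat d} (h : sameLine e x y) :
    sameLine e y x := by
  obtain ⟨c, hc⟩ := h
  refine ⟨-c, ?_⟩
  ext i
  have := congrFun hc i
  simp at this ⊢
  linarith

theorem sameLine_trans {d : ℕ} {e : Fin d → ℝ} {x y z : ZLat d} (h : sameLine e x y)
    (h' : sameLine e y z) : sameLine e x z := by
  obtain ⟨c, hc⟩ := h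
  obtain ⟨c', hc'⟩ := h'
  refine ⟨c + c', ?_⟩
  ext i
  have := congrFun hc i
  have := congrFun hc' i
  simp at *
  linarith

def lineSetoid {d : ℕ} (e : Fin d → ℝ) : Setoid (ZLat d) :=
  ⟨sameLine e, sameLine_refl e, sameLine_symm, sameLine_trans⟩

def lineNth {d : ℕ} (e : Fin d → ℝ) (u : ZLat d → NNReal) (x : ZLat d) (n : ℕ) : NNReal :=
  nthLargest (fun y : {y : ZLat d // sameLine e x y} => u y.1) n

theorem lineNth_congr {d : ℕ} {e : Fin d → ℝ} (u : ZLat d → NNReal) {x y : ZLat d}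
    (h : sameLine e x y) (n : ℕ) : lineNth e u x n = lineNth e u y n := by
  have : sameLine e x = sameLine e y := by
    funext z
    exact propext ⟨fun h' => sameLine_trans (sameLine_symm h) h', fun h' => sameLine_trans h h'⟩
  unfold lineNth
  rw [this]

theorem stepR_eq {d : ℕ} (e : Fin d → ℝ) (u : ZLat d → NNReal) (x : ZLat d) :
    stepR e u x = lineNth e u x (posIdx (pairing e x)) := rfl

theorem stepR_le {d : ℕ} (e : Fin d → ℝ) {u : ZLat d → NNReal} {M : NNReal} (hM : ∀ x, u x ≤ M)
    (x : ZLat d) : stepR e u x ≤ M :=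
  nthLargest_le' (fun _ => hM _) (posIdx_pos _)

theorem stepR_mono {d : ℕ} (e : Fin d → ℝ) {u : ZLat d → NNReal} {M : NNReal} (hM : ∀ x, u x ≤ M)
    {x y : ZLat d} (h : sameLine e x y) (hp : posIdx (pairing e y) ≤ posIdx (pairing e x)) :
    stepR e u x ≤ stepR e u y := by
  rw [stepR_eq, stepR_eq, lineNth_congr u h]
  exact nthLargest_anti' (fun _ => hM _) (posIdx_pos _) hp

/-- potential -/
def phi {d : ℕ} (x : ZLat d) : ℤ := ∑ i, (((d:ℤ)+1) * x i ^ 2 - ((d:ℤ) - (i:ℕ)) * x i)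

structure GoodDir {d : ℕ} (e : Fin d → ℝ) (v : ZLat d) : Prop where
  line : ∀ (x : ZLat d) (k : ℤ), sameLine e x (x + k • v)
  ne : v ≠ 0
  pos : ∀ (x : ZLat d) (k : ℤ), 0 < pairing e x → 1 ≤ k → k < pairing e x →
    phi (x - k • v) < phi x
  neg : ∀ (x : ZLat d) (k : ℤ), pairing e x ≤ 0 → 1 ≤ k → k ≤ - pairing e x →
    phi (x + k • v) < phi x

/-- the points on the line of `x` of position at most that of `x` -/
def lowPt {d : ℕ} (e : Fin d → ℝ) (v x : ZLat d) (k : ℕ) : ZLat d :=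
  if 0 < pairing e x then x - (k:ℤ) • v else x + (k:ℤ) • v

def lowPts {d : ℕ} (e : Fin d → ℝ) (v x : ZLat d) : Finset (ZLat d) :=
  (Finset.range (posIdx (pairing e x))).image (lowPt e v x)

theorem card_lowPts {d : ℕ} {e : Fin d → ℝ} {v : ZLat d} (h : v ≠ 0) (x : ZLat d) :
    (lowPts e v x).card = posIdx (pairing e x) := by
  unfold lowPts
  rw [Finset.card_image_of_injective, Finset.card_range]
  intro a b hab
  unfold lowPt at hab
  have : (a : ℤ) • v = (b : ℤ) • v := by
    split_ifs at hab
    · simpa using hab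
    · simpa using hab
  have := smul_left_injective ℤ h this
  exact_mod_cast this

theorem lowPts_phi {d : ℕ} {e : Fin d → ℝ} {v : ZLat d} (h : GoodDir e v) {x y : ZLat d}
    (hy : y ∈ lowPts e v x) : y = x ∨ phi y < phi x := by
  unfold lowPts at hy
  obtain ⟨k, hk, rfl⟩ := Finset.mem_image.mp hy
  rw [Finset.mem_range] at hk
  rcases Nat.eq_zero_or_pos k with rfl | hk0
  · left; simp [lowPt]
  right
  unfold lowPt
  unfold posIdx at hk
  split_ifs at hk ⊢ with h1
  · exact h.pos x k h1 (by omega) (by omega)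
  · exact h.neg x k (by omega) (by omega) (by omega)

theorem lowPts_line {d : ℕ} {e : Fin d → ℝ} {v : ZLat d} (h : GoodDir e v) {x y : ZLat d}
    (hy : y ∈ lowPts e v x) : sameLine e x y := by
  unfold lowPts at hy
  obtain ⟨k, hk, rfl⟩ := Finset.mem_image.mp hy
  unfold lowPt
  split_ifs
  · have := h.line x (-k)
    simpa [sub_eq_add_neg] using this
  · exact h.line x k

theorem line_sum {d : ℕ} {e : Fin d → ℝ} {v : ZLat d} (h : GoodDir e v) {a : ℕ → NNReal}
    (ha : ∀ m n, 1 ≤ m → m ≤ n → a n ≤ a m) (n : ℕ) :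
    ∀ S : Finset (ZLat d), S.card = n → (∀ x ∈ S, lowPts e v x ⊆ S) →
    ∑ j ∈ Finset.range n, a (j+1) ≤ ∑ x ∈ S, a (posIdx (pairing e x)) := by
  induction n with
  | zero => intro S hS; simp
  | succ n ih =>
    intro S hS hlow
    obtain ⟨x, hx, hmax⟩ := S.exists_max_image phi (Finset.card_pos.mp (by omega))
    rw [Finset.sum_range_succ, ← Finset.sum_erase_add S _ hx]
    refine add_le_add (ih _ (by rw [Finset.card_erase_of_mem hx]; omega) ?_) ?_
    · intro y hy z hz
      have hyS := Finset.mem_of_mem_erase hy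
      refine Finset.mem_erase.mpr ⟨?_, hlow y hyS hz⟩
      rintro rfl
      rcases lowPts_phi h hz with h1 | h1
      · exact (Finset.ne_of_mem_erase hy) h1.symm
      · exact absurd (hmax y hyS) (by omega)
    · apply ha _ _ (posIdx_pos _)
      rw [← hS, ← card_lowPts h.ne]
      exact Finset.card_le_card (hlow x hx)

theorem sum_le_stepR {d : ℕ} {e : Fin d → ℝ} {v : ZLat d} (h : GoodDir e v)
    {u : ZLat d → NNReal} {M : NNReal} (hM : ∀ x, u x ≤ M) (S : Finset (ZLat d))
    (hS : ∀ x ∈ S, lowPts e v x ⊆ S) : ∑ x ∈ S, u x ≤ ∑ x ∈ S, stepR e u x := by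
  classical
  rw [Finset.sum_partition (lineSetoid e), Finset.sum_partition (lineSetoid e) (f := stepR e u)]
  refine Finset.sum_le_sum ?_
  intro q hq
  obtain ⟨x0, hx0, rfl⟩ := Finset.mem_image.mp hq
  set T := S.filter (fun y => (Quotient.mk (lineSetoid e) y) = Quotient.mk (lineSetoid e) x0) with hT
  have hTl : ∀ y ∈ T, sameLine e x0 y := by
    intro y hy
    have := (Finset.mem_filter.mp hy).2
    exact sameLine_symm (Quotient.exact this)
  have hTlow : ∀ x ∈ T, lowPts e v x ⊆ T := by
    intro x hx y hy
    refine Finset.mem_filter.mpr ⟨hS x (Finset.mem_filter.mp hx).1 hy, ?_⟩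
    exact Quotient.sound (sameLine_symm (sameLine_trans (hTl x hx) (lowPts_line h hy)))
  calc ∑ x ∈ T, u x = ∑ x ∈ T.subtype (sameLine e x0), u x.1 := by
        rw [Finset.sum_subtype_of_mem _ hTl]
    _ ≤ ∑ j ∈ Finset.range T.card, lineNth e u x0 (j+1) := by
        refine sum_le_nth (u := fun y : {y // sameLine e x0 y} => u y.1) (fun x => hM x.1) _ _ ?_
        rw [Finset.card_subtype, Finset.filter_true_of_mem hTl]
    _ ≤ ∑ x ∈ T, lineNth e u x0 (posIdx (pairing e x)) := by
        refine line_sum h ?_ _ T rfl hTlow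
        intro m n hm hn
        exact nthLargest_anti' (fun _ => hM _) hm hn
    _ = ∑ x ∈ T, stepR e u x := by
        refine Finset.sum_congr rfl fun x hx => ?_
        rw [stepR_eq, lineNth_congr u (hTl x hx)]

theorem phi_ge {d : ℕ} (x : ZLat d) (i : Fin d) : x i ^ 2 ≤ phi x := by
  have key : ∀ j : Fin d, x j ^ 2 ≤ ((d:ℤ)+1) * x j ^ 2 - ((d:ℤ) - (j:ℕ)) * x j := by
    intro j
    have h1 : x j ≤ x j ^ 2 := by
      rcases le_or_gt (x j) 0 with h | h <;> nlinarith
    have h2 : (0:ℤ) ≤ (d:ℤ) - (j:ℕ) := by have := j.2; omega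
    have h3 : (0:ℤ) ≤ (j:ℕ) := by omega
    nlinarith [mul_le_mul_of_nonneg_left h1 h2, mul_nonneg h3 (sq_nonneg (x j))]
  calc x i ^ 2 ≤ ∑ j, x j ^ 2 :=
        Finset.single_le_sum (f := fun j => x j ^ 2) (fun j _ => sq_nonneg _) (Finset.mem_univ i)
    _ ≤ phi x := Finset.sum_le_sum fun j _ => key j

theorem phi_finite {d : ℕ} (r : ℤ) : {x : ZLat d | phi x ≤ r}.Finite := by
  refine (Set.Finite.pi' (fun _ : Fin d => Set.finite_Icc (-|r|) |r|)).subset ?_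
  intro x hx i
  have h1 := phi_ge x i
  have h2 : phi x ≤ r := hx
  have h3 := le_abs_self r
  have : x i ^ 2 ≤ |r| := by omega
  constructor <;> nlinarith

theorem iterR_le {d : ℕ} {u : ZLat d → NNReal} {M : NNReal} (hM : ∀ x, u x ≤ M) (k : ℕ) :
    ∀ x, iterR d u k x ≤ M := by
  induction k with
  | zero => exact hM
  | succ k ih => exact fun x => stepR_le _ ih x

theorem iterR_sum_tendsto {d : ℕ} (hgood : ∀ k : ℕ, ∃ v, GoodDir ((EvecList d).getD (k % (EvecList d).length) 0) v)
    {u : ZLat d → NNReal} {M : NNReal} (hM : ∀ x, u x ≤ M) (S : Finset (ZLat d))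
    (hS : ∀ e v, GoodDir e v → ∀ x ∈ S, lowPts e v x ⊆ S) :
    ∃ l : ℝ, Tendsto (fun k => ∑ x ∈ S, (iterR d u k x : ℝ)) atTop (𝓝 l) := by
  refine ⟨_, tendsto_atTop_ciSup (monotone_nat_of_le_succ ?_) ⟨∑ x ∈ S, (M:ℝ), ?_⟩⟩
  · intro k
    obtain ⟨v, hv⟩ := hgood k
    have := sum_le_stepR hv (iterR_le hM k) S (hS _ v hv)
    exact_mod_cast this
  · rintro _ ⟨k, rfl⟩
    exact Finset.sum_le_sum fun x _ => by exact_mod_cast iterR_le hM k x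

theorem iterR_tendsto {d : ℕ} (hgood : ∀ k : ℕ, ∃ v, GoodDir ((EvecList d).getD (k % (EvecList d).length) 0) v)
    {u : ZLat d → NNReal} {M : NNReal} (hM : ∀ x, u x ≤ M) (x : ZLat d) :
    Tendsto (fun k => iterR d u k x) atTop (𝓝 (RZd d u x)) := by
  classical
  apply tendsto_nhds_limUnder
  set S := (phi_finite (d := d) (phi x)).toFinset with hS
  have hmem : ∀ y, y ∈ S ↔ phi y ≤ phi x := by intro y; simp [hS]
  have hx : x ∈ S := (hmem x).2 le_rfl
  obtain ⟨l, hl⟩ := iterR_sum_tendsto hgood hM S (by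
    intro e v h y hy z hz
    rw [hmem] at hy ⊢
    rcases lowPts_phi h hz with rfl | h1
    · exact hy
    · omega)
  obtain ⟨l', hl'⟩ := iterR_sum_tendsto hgood hM (S.erase x) (by
    intro e v h y hy z hz
    rw [Finset.mem_erase, hmem] at hy ⊢
    rcases lowPts_phi h hz with rfl | h1
    · exact hy
    · exact ⟨by rintro rfl; omega, by omega⟩)
  have h1 : Tendsto (fun k => (iterR d u k x : ℝ)) atTop (𝓝 (l - l')) := by
    refine (hl.sub hl').congr fun k => ?_
    rw [← Finset.sum_erase_add S _ hx]; ring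
  have h0 : 0 ≤ l - l' := ge_of_tendsto' h1 fun k => NNReal.coe_nonneg _
  exact ⟨⟨l - l', h0⟩, NNReal.tendsto_coe.mp h1⟩

theorem sym_mono {d : ℕ} (hgood : ∀ e ∈ EvecList d, ∃ v, GoodDir e v)
    {u : ZLat d → NNReal} {M : NNReal} (hM : ∀ x, u x ≤ M) (hsym : RZd d u = u)
    {e : Fin d → ℝ} (he : e ∈ EvecList d) {x y : ZLat d} (h : sameLine e x y)
    (hp : posIdx (pairing e y) ≤ posIdx (pairing e x)) : u x ≤ u y := by
  obtain ⟨n, hn, rfl⟩ := List.mem_iff_getElem.mp he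
  have hgood' : ∀ k : ℕ, ∃ v, GoodDir ((EvecList d).getD (k % (EvecList d).length) 0) v := by
    intro k
    apply hgood
    rw [List.getD_eq_getElem _ _ (Nat.mod_lt _ (by omega))]
    exact List.getElem_mem _
  have hx := iterR_tendsto hgood' hM x
  have hy := iterR_tendsto hgood' hM y
  rw [hsym] at hx hy
  refine le_of_tendsto_of_tendsto_of_frequently hx hy ?_
  rw [frequently_atTop]
  intro a
  refine ⟨(EvecList d).length * a + n + 1, ?_, ?_⟩
  · have : 0 < (EvecList d).length := by omega
    nlinarith
  · have hk : ((EvecList d).length * a + n) % (EvecList d).length = n := by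
      rw [Nat.mul_add_mod, Nat.mod_eq_of_lt hn]
    simp only [iterR, hk]
    rw [List.getD_eq_getElem _ _ hn]
    exact stepR_mono _ (iterR_le hM _) h hp

theorem goodDir_of {d : ℕ} {e : Fin d → ℝ} {v : ZLat d} (c : ℝ) (hc : ∀ i, (v i : ℝ) = c * e i)
    (s : ℤ) (hs : 0 < s) (hv : ∑ i, v i ^ 2 = s) (hx : ∀ x : ZLat d, 2 * ∑ i, x i * v i = s * pairing e x)
    (hW : 0 < ∑ i, ((d:ℤ) - (i:Fin d).val) * v i) (hW' : ∑ i, ((d:ℤ) - (i:Fin d).val) * v i < s * ((d:ℤ)+1)) :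
    GoodDir e v := by
  have hphi : ∀ (x : ZLat d) (k : ℤ), phi (x + k • v) =
      phi x + s * ((d:ℤ)+1) * k * (pairing e x + k) - k * ∑ i, ((d:ℤ) - (i:Fin d).val) * v i := by
    intro x k
    have h1 : phi (x + k • v) = phi x + (((d:ℤ)+1) * (k * (2 * ∑ i, x i * v i) + k ^ 2 * ∑ i, v i ^ 2)
        - k * ∑ i, ((d:ℤ) - (i:Fin d).val) * v i) := by
      unfold phi
      simp only [Finset.mul_sum, ← Finset.sum_add_distrib, ← Finset.sum_sub_distrib]
      refine Finset.sum_congr rfl fun i _ => ?_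
      simp only [Pi.add_apply, Pi.smul_apply, smul_eq_mul]
      ring
    rw [h1, hx, hv]; ring
  refine ⟨?_, ?_, ?_, ?_⟩
  · intro x k
    refine ⟨-(k * c), ?_⟩
    ext i
    simp [hc]
    ring
  · rintro rfl
    simp at hv; omega
  · intro x k hp hk hkp
    have := hphi x (-k)
    rw [neg_smul, ← sub_eq_add_neg] at this
    rw [this]
    have h2 : s * ((d:ℤ)+1) ≤ s * ((d:ℤ)+1) * (pairing e x - k) := by
      have : 0 ≤ s * ((d:ℤ)+1) := by positivity
      nlinarith
    nlinarith
  · intro x k hp hk hkp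
    rw [hphi]
    have h2 : s * ((d:ℤ)+1) * (pairing e x + k) ≤ 0 := by
      have : 0 ≤ s * ((d:ℤ)+1) := by positivity
      exact mul_nonpos_of_nonneg_of_nonpos this (by omega)
    nlinarith

theorem pairing_std {d : ℕ} (i : Fin d) (x : ZLat d) : pairing (stdVec d i) x = 2 * x i := by
  have : 2 * ∑ k, stdVec d i k * (x k : ℝ) = ((2 * x i : ℤ) : ℝ) := by
    simp [stdVec]
  unfold pairing
  rw [this, Int.floor_intCast]

theorem good_std {d : ℕ} (i : Fin d) : GoodDir (stdVec d i) (Pi.single i 1) := by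
  have hi := i.2
  refine goodDir_of 1 ?_ 1 (by norm_num) ?_ ?_ ?_ ?_
  · intro j; simp [stdVec, Pi.single_apply]
  · simp [Pi.single_apply]
  · intro x; rw [pairing_std]; simp [Pi.single_apply]
  · simp [Pi.single_apply]
  · simp [Pi.single_apply]

theorem good_add {d : ℕ} (i j : Fin d) (hij : i < j) :
    GoodDir (fun k => (stdVec d i k + stdVec d j k) / 2) (Pi.single i 1 + Pi.single j 1) := by
  have hi := i.2
  have hj := j.2
  have hne : i ≠ j := hij.ne
  have hp : ∀ x : ZLat d, pairing (fun k => (stdVec d i k + stdVec d j k) / 2) x = x i + x j := by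
    intro x
    have : 2 * ∑ k, (stdVec d i k + stdVec d j k) / 2 * (x k : ℝ) = ((x i + x j : ℤ) : ℝ) := by
      simp [stdVec, add_div, add_mul, Finset.sum_add_distrib, ite_div]
      ring
    unfold pairing
    rw [this, Int.floor_intCast]
  refine goodDir_of 2 ?_ 2 (by norm_num) ?_ ?_ ?_ ?_
  · intro j; simp [stdVec, Pi.single_apply]; ring
  · simp [Pi.single_apply, add_sq, Finset.sum_add_distrib, hne.symm]
  · intro x; rw [hp]; simp [Pi.single_apply, mul_add, Finset.sum_add_distrib]
  · simp [Pi.single_apply, mul_add, Finset.sum_add_distrib]; omega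
  · simp [Pi.single_apply, mul_add, Finset.sum_add_distrib]; omega

theorem good_sub {d : ℕ} (i j : Fin d) (hij : i < j) :
    GoodDir (fun k => (stdVec d i k - stdVec d j k) / 2) (Pi.single i 1 - Pi.single j 1) := by
  have hi := i.2
  have hj := j.2
  have hne : i ≠ j := hij.ne
  have hp : ∀ x : ZLat d, pairing (fun k => (stdVec d i k - stdVec d j k) / 2) x = x i - x j := by
    intro x
    have : 2 * ∑ k, (stdVec d i k - stdVec d j k) / 2 * (x k : ℝ) = ((x i - x j : ℤ) : ℝ) := by
      simp [stdVec, sub_div, sub_mul, Finset.sum_sub_distrib, ite_div]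
      ring
    unfold pairing
    rw [this, Int.floor_intCast]
  refine goodDir_of 2 ?_ 2 (by norm_num) ?_ ?_ ?_ ?_
  · intro j; simp [stdVec, Pi.single_apply]; ring
  · simp [Pi.single_apply, sub_sq, Finset.sum_add_distrib, Finset.sum_sub_distrib, hne.symm]
  · intro x; rw [hp]; simp [Pi.single_apply, mul_sub, Finset.sum_sub_distrib]
  · simp [Pi.single_apply, mul_sub, Finset.sum_sub_distrib]; omega
  · simp [Pi.single_apply, mul_sub, Finset.sum_sub_distrib]; omega

theorem good_all {d : ℕ} : ∀ e ∈ EvecList d, ∃ v, GoodDir e v := by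
  intro e he
  simp only [EvecList, List.mem_append, List.mem_map, List.mem_flatMap, List.mem_filterMap,
    List.mem_finRange, true_and] at he
  rcases he with (⟨i, rfl⟩ | ⟨i, j, h⟩) | ⟨i, j, h⟩
  · exact ⟨_, good_std i⟩
  · split_ifs at h with hij
    simp only [Option.some.injEq] at h
    subst h
    exact ⟨_, good_add i j hij⟩
  · split_ifs at h with hij
    simp only [Option.some.injEq] at h
    subst h
    exact ⟨_, good_sub i j hij⟩

theorem std_mem {d : ℕ} (i : Fin d) : stdVec d i ∈ EvecList d := by
  simp [EvecList]

theorem lowPts_std_pos {d : ℕ} (i : Fin d) {x y : ZLat d}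
    (hy : y ∈ lowPts (stdVec d i) (Pi.single i 1) x) :
    posIdx (pairing (stdVec d i) y) ≤ posIdx (pairing (stdVec d i) x) := by
  unfold lowPts at hy
  obtain ⟨k, hk, rfl⟩ := Finset.mem_image.mp hy
  rw [Finset.mem_range] at hk
  unfold lowPt
  rw [pairing_std] at *
  unfold posIdx at *
  split_ifs at hk ⊢ with h1 <;> simp [pairing_std] at * <;> omega

theorem sym_decay {d : ℕ} {p : ℝ} {u : ZLat d → NNReal} (hp : 1 ≤ p)
    (hbd : ∑' x : ZLat d, (u x : ENNReal) ^ p ≤ 1) (hsym : RZd d u = u) (hM : ∀ x, u x ≤ 1)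
    (x : ZLat d) (i : Fin d) : ((x i).natAbs : ENNReal) * (u x : ENNReal) ^ p ≤ 1 := by
  have hp0 : 0 ≤ p := by linarith
  set L := lowPts (stdVec d i) (Pi.single i 1) x with hL
  have hcard : (x i).natAbs ≤ L.card := by
    rw [hL, card_lowPts (good_std i).ne, pairing_std]
    unfold posIdx
    split_ifs <;> omega
  calc ((x i).natAbs : ENNReal) * (u x : ENNReal) ^ p ≤ (L.card : ENNReal) * (u x : ENNReal) ^ p := by
        gcongr
    _ = ∑ y ∈ L, (u x : ENNReal) ^ p := by simp
    _ ≤ ∑ y ∈ L, (u y : ENNReal) ^ p := by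
        refine Finset.sum_le_sum fun y hy => ENNReal.rpow_le_rpow ?_ hp0
        have := sym_mono good_all hM hsym (std_mem i) (lowPts_line (good_std i) hy) (lowPts_std_pos i hy)
        exact_mod_cast this
    _ ≤ ∑' y, (u y : ENNReal) ^ p := ENNReal.sum_le_tsum _
    _ ≤ 1 := hbd

/-- uniform smallness outside a finite set -/
theorem unif_decay {d : ℕ} {p : ℝ} {u : ℕ → ZLat d → NNReal} (hp : 1 ≤ p)
    (h : ∀ n x (i : Fin d), ((x i).natAbs : ENNReal) * (u n x : ENNReal) ^ p ≤ 1)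
    {ε : NNReal} (hε : 0 < ε) : ∃ K : Finset (ZLat d), ∀ n, ∀ x ∉ K, u n x ≤ ε := by
  obtain ⟨N, hN⟩ := exists_nat_gt ((ε ^ p)⁻¹)
  have hεp : 0 < ε ^ p := NNReal.rpow_pos hε
  refine ⟨Fintype.piFinset fun _ => Finset.Icc (-(N:ℤ)) N, fun n x hx => ?_⟩
  rw [Fintype.mem_piFinset] at hx
  push Not at hx
  obtain ⟨i, hi⟩ := hx
  rw [Finset.mem_Icc] at hi
  have hi' : N ≤ (x i).natAbs := by omega
  by_contra! hlt
  have h1 := h n x i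
  rw [← ENNReal.coe_rpow_of_nonneg _ (by linarith : 0 ≤ p)] at h1
  have h2 : ((x i).natAbs : NNReal) * (u n x) ^ p ≤ 1 := by exact_mod_cast h1
  have h3 : ε ^ p ≤ u n x ^ p := NNReal.rpow_le_rpow hlt.le (by linarith)
  have h4 : (N : NNReal) * ε ^ p ≤ 1 := le_trans (by gcongr) h2
  have h5 : (ε ^ p)⁻¹ * ε ^ p < N * ε ^ p := by gcongr
  rw [inv_mul_cancel₀ hεp.ne'] at h5
  exact absurd h4 (not_le.mpr h5)

theorem diff_bound {p q : ℝ} (hp : 1 ≤ p) (hq : p < q) {a b ε : NNReal} (ha : a ≤ ε) (hb : b ≤ ε) :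
    ENNReal.ofReal (|(a : ℝ) - (b : ℝ)| ^ q) ≤
      (ε : ENNReal) ^ (q - p) * ((a : ENNReal) ^ p + (b : ENNReal) ^ p) := by
  have hp0 : 0 < p := by linarith
  have key : ∀ {a b : NNReal}, a ≤ ε → b ≤ a → ENNReal.ofReal (|(a : ℝ) - (b : ℝ)| ^ q) ≤
      (ε : ENNReal) ^ (q - p) * (a : ENNReal) ^ p := by
    intro a b ha hab
    have hab' : (b:ℝ) ≤ a := hab
    have h1 : |(a : ℝ) - (b : ℝ)| ≤ a := by
      rw [abs_of_nonneg (by linarith)]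
      have := b.2
      linarith [NNReal.coe_nonneg b]
    calc ENNReal.ofReal (|(a : ℝ) - (b : ℝ)| ^ q) ≤ ENNReal.ofReal ((a:ℝ) ^ q) :=
          ENNReal.ofReal_le_ofReal (Real.rpow_le_rpow (abs_nonneg _) h1 (by linarith))
      _ = (a : ENNReal) ^ q := by
          rw [← ENNReal.ofReal_rpow_of_nonneg (NNReal.coe_nonneg a) (by linarith)]
          simp
      _ = (a : ENNReal) ^ (q - p) * (a : ENNReal) ^ p := by
          rw [← ENNReal.rpow_add_of_nonneg _ _ (by linarith) (by linarith)]
          congr 1; ring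
      _ ≤ _ := by
          gcongr
  rcases le_total b a with h | h
  · refine (key ha h).trans ?_
    gcongr
    exact le_self_add
  · rw [abs_sub_comm]
    refine (key hb h).trans ?_
    gcongr
    exact le_add_self

theorem main_aux (d : ℕ) (p q : ℝ) (hp : 1 ≤ p) (hq : p < q)
    (u : ℕ → ZLat d → NNReal) 
    (hsym : ∀ i, RZd d (u i) = u i)
    (hbd : ∀ i, (∑' x : ZLat d, (u i x : ENNReal) ^ p) ^ (1 / p) ≤ 1) :
    ∃ φ : ℕ → ℕ, StrictMono φ ∧ ∃ v : ZLat d → NNReal,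
      Tendsto
        (fun i => (∑' x : ZLat d, ENNReal.ofReal (|(u (φ i) x : ℝ) - (v x : ℝ)| ^ q)) ^ (1 / q))
        atTop (𝓝 0) := by
  have hp0 : 0 < p := by linarith
  have hq0 : 0 < q := by linarith
  have hbd' : ∀ i, ∑' x : ZLat d, (u i x : ENNReal) ^ p ≤ 1 := by
    intro i
    have := ENNReal.rpow_le_rpow (hbd i) hp0.le
    rwa [← ENNReal.rpow_mul, one_div_mul_cancel hp0.ne', ENNReal.rpow_one, ENNReal.one_rpow] at this
  have hM : ∀ i x, u i x ≤ 1 := by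
    intro i x
    have h1 : (u i x : ENNReal) ^ p ≤ 1 := (ENNReal.le_tsum x).trans (hbd' i)
    by_contra! hlt
    exact absurd h1 (not_le.mpr (ENNReal.one_lt_rpow (by exact_mod_cast hlt) hp0))
  have hdec := fun n x i => sym_decay hp (hbd' n) (hsym n) (hM n) x i
  have hcomp : IsCompact (Set.pi Set.univ fun _ : ZLat d => Set.Icc (0:NNReal) 1) :=
    isCompact_univ_pi fun _ => isCompact_Icc
  obtain ⟨v, -, φ, hφ, hlim⟩ := hcomp.tendsto_subseq (x := u) fun n x _ => ⟨zero_le, hM n x⟩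
  have hlim' : ∀ x, Tendsto (fun i => u (φ i) x) atTop (𝓝 (v x)) := fun x =>
    (tendsto_pi_nhds.mp hlim) x
  refine ⟨φ, hφ, v, ?_⟩
  have hv : ∑' x : ZLat d, (v x : ENNReal) ^ p ≤ 1 := by
    rw [ENNReal.tsum_eq_iSup_sum]
    refine iSup_le fun S => ?_
    have : Tendsto (fun i => ∑ x ∈ S, (u (φ i) x : ENNReal) ^ p) atTop
        (𝓝 (∑ x ∈ S, (v x : ENNReal) ^ p)) := by
      refine tendsto_finsetSum _ fun x _ => ?_
      exact ((ENNReal.continuous_rpow_const (y := p)).tendsto _).comp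
        (ENNReal.tendsto_coe.mpr (hlim' x))
    exact le_of_tendsto' this fun i => (ENNReal.sum_le_tsum S).trans (hbd' _)
  suffices hs : Tendsto (fun i => ∑' x : ZLat d, ENNReal.ofReal (|(u (φ i) x : ℝ) - (v x : ℝ)| ^ q))
      atTop (𝓝 0) by
    have := ((ENNReal.continuous_rpow_const (y := 1 / q)).tendsto 0).comp hs
    rwa [ENNReal.zero_rpow_of_pos (by positivity)] at this
  have hpt : ∀ x, Tendsto (fun i => ENNReal.ofReal (|(u (φ i) x : ℝ) - (v x : ℝ)| ^ q)) atTop (𝓝 0) := by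
    intro x
    have h1 : Tendsto (fun i => |(u (φ i) x : ℝ) - (v x : ℝ)| ^ q) atTop (𝓝 (|(v x : ℝ) - v x| ^ q)) :=
      (((NNReal.tendsto_coe.mpr (hlim' x)).sub_const _).abs).rpow_const (Or.inr hq0.le)
    have := ENNReal.tendsto_ofReal h1
    simpa [Real.zero_rpow hq0.ne'] using this
  rw [ENNReal.tendsto_nhds_zero]
  intro δ hδ
  -- choose the tolerance
  obtain ⟨ε, hε, hεδ⟩ : ∃ ε : NNReal, 0 < ε ∧ (ε : ENNReal) ^ (q - p) * 2 ≤ δ / 2 := by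
    have h1 : Tendsto (fun ε : NNReal => (ε : ENNReal) ^ (q - p) * 2) (𝓝[>] 0) (𝓝 0) := by
      have h2 : Tendsto (fun ε : NNReal => (ε : ENNReal) ^ (q - p)) (𝓝[>] 0) (𝓝 0) := by
        have h3 : Tendsto (fun ε : NNReal => (ε : ENNReal)) (𝓝[>] 0) (𝓝 0) :=
          (ENNReal.continuous_coe.tendsto' 0 0 (by simp)).mono_left nhdsWithin_le_nhds
        have := ((ENNReal.continuous_rpow_const (y := q - p)).tendsto 0).comp h3
        rwa [ENNReal.zero_rpow_of_pos (by linarith)] at this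
      have := ENNReal.Tendsto.mul_const (b := 2) h2 (Or.inr (by simp))
      simpa using this
    have h2 := (ENNReal.tendsto_nhds_zero.mp h1) (δ / 2) (ENNReal.half_pos hδ.ne')
    obtain ⟨ε, h3, h4⟩ := (h2.and self_mem_nhdsWithin).exists
    exact ⟨ε, h4, h3⟩
  obtain ⟨K, hK⟩ := unif_decay hp hdec hε
  have hKv : ∀ x ∉ K, v x ≤ ε := fun x hx => le_of_tendsto' (hlim' x) fun i => hK _ x hx
  have hKlim : Tendsto (fun i => ∑ x ∈ K, ENNReal.ofReal (|(u (φ i) x : ℝ) - (v x : ℝ)| ^ q))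
      atTop (𝓝 0) := by
    have := tendsto_finsetSum K fun x _ => hpt x
    simpa using this
  filter_upwards [(ENNReal.tendsto_nhds_zero.mp hKlim) (δ / 2) (ENNReal.half_pos hδ.ne')] with i hi
  classical
  calc ∑' x : ZLat d, ENNReal.ofReal (|(u (φ i) x : ℝ) - (v x : ℝ)| ^ q)
      ≤ ∑' x : ZLat d, ((if x ∈ K then ENNReal.ofReal (|(u (φ i) x : ℝ) - (v x : ℝ)| ^ q) else 0)
          + (ε : ENNReal) ^ (q - p) * ((u (φ i) x : ENNReal) ^ p + (v x : ENNReal) ^ p)) := by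
        refine ENNReal.tsum_le_tsum fun x => ?_
        by_cases hx : x ∈ K
        · rw [if_pos hx]; exact le_self_add
        · rw [if_neg hx, zero_add]
          exact diff_bound hp hq (hK _ x hx) (hKv x hx)
    _ = ∑ x ∈ K, ENNReal.ofReal (|(u (φ i) x : ℝ) - (v x : ℝ)| ^ q)
          + (ε : ENNReal) ^ (q - p) * (∑' x, (u (φ i) x : ENNReal) ^ p + ∑' x, (v x : ENNReal) ^ p) := by
        rw [ENNReal.tsum_add, ENNReal.tsum_mul_left, ENNReal.tsum_add]
        congr 1
        rw [tsum_eq_sum (s := K) (fun x hx => if_neg hx)]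
        exact Finset.sum_congr rfl fun x hx => if_pos hx
    _ ≤ δ / 2 + (ε : ENNReal) ^ (q - p) * (1 + 1) := by
        gcongr
        exact hbd' _
    _ ≤ δ / 2 + δ / 2 := by
        gcongr
        rwa [one_add_one_eq_two]
    _ = δ := ENNReal.add_halves δ

/-- Compactness: a sequence of Schwarz symmetric functions bounded by 1 in ℓ^p has a
subsequence converging in ℓ^q for every q > p. -/
theorem stmt8 (d : ℕ) (hd : 2 ≤ d) (p q : ℝ) (hp : 1 ≤ p) (hq : p < q)
    (u : ℕ → ZLat d → NNReal) (hadm : ∀ i, Admissible (u i))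
    (hsym : ∀ i, RZd d (u i) = u i)
    (hbd : ∀ i, (∑' x : ZLat d, (u i x : ENNReal) ^ p) ^ (1 / p) ≤ 1) :
    ∃ φ : ℕ → ℕ, StrictMono φ ∧ ∃ v : ZLat d → NNReal,
      Tendsto
        (fun i => (∑' x : ZLat d, ENNReal.ofReal (|(u (φ i) x : ℝ) - (v x : ℝ)| ^ q)) ^ (1 / q))
        atTop (𝓝 0) := by
  exact main_aux d p q hp hq u hsym hbd

end
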